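/- arXiv:1608.06730 — 2 statements merged into one kernel-verified Lean document; each statement's English description precedes it below -/
import Mathlib

section
/- Fix 1 < p < ∞. For dyadic λ ∈ 2^ℤ let f_λ : ℝ → ℝ be defined by its Fourier transform f̂_λ(ξ) = λ^{−1} for λ ≤ |ξ| < 2λ and f̂_λ(ξ) = 0 otherwise, and for 0 < μ ≤ 1/4 set φ_μ = |ln μ|^{−1/p} ∑_{λ∈2^ℤ, μ² ≤ λ ≤ μ} f_λ. Then there exist constants c, C > 0 (depending only on p) such that for all 0 < μ ≤ 1/4: (a) c ≤ ( ∑_{λ∈2^ℤ} λ^{p/2} ‖(φ_μ)_λ‖_{L²(ℝ)}^p )^{1/p} ≤ C, where (φ_μ)_λ denotes the Fourier projection to {λ ≤ |ξ| < 2λ}; and (b) for every Schwartz function ψ on ℝ whose Fourier transform is supported in [−2,2] and equals 1 on [−1,1], one has ∫_ℝ ψ φ_μ dx ≥ c_ψ |ln μ|^{1−1/p} for all sufficiently small μ, for some constant c_ψ > 0. -/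
/-!
STATEMENT 16: the explicit Besov example. For λ ∈ 2^ℤ, f_λ has Fourier
transform λ^{-1} on {λ ≤ |ξ| < 2λ} (so f_λ is the corresponding inverse
Fourier integral), and φ_μ = |ln μ|^{-1/p} ∑_{μ² ≤ λ ≤ μ} f_λ. The dyadic
(Fourier) projection of φ_μ to {λ ≤ |ξ| < 2λ}, λ = 2^n, is exactly the n-th
summand `phimuPiece p μ n`. Claim (a): the homogeneous Ḃ^{1/2}_{2,p} norm of
φ_μ is bounded above and below by constants depending only on p, for
0 < μ ≤ 1/4. Claim (b): pairing with any Schwartz ψ whose Fourier transform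
is supported in [−2,2] and ≡ 1 on [−1,1] grows like |ln μ|^{1−1/p}.
-/

noncomputable section

open MeasureTheory
open scoped ENNReal

/-- One-dimensional (nonunitary) Fourier transform. -/
def ft1 (f : ℝ → ℂ) (ξ : ℝ) : ℂ :=
  ∫ x : ℝ, Complex.exp (-Complex.I * ((x * ξ : ℝ) : ℂ)) * f x

/-- f_λ : the inverse Fourier integral of λ^{-1} 1_{{λ ≤ |ξ| < 2λ}}. -/
def fl (l : ℝ) (x : ℝ) : ℂ :=
  ∫ ξ in {ξ : ℝ | l ≤ |ξ| ∧ |ξ| < 2 * l},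
    ((l⁻¹ : ℝ) : ℂ) * Complex.exp (Complex.I * ((x * ξ : ℝ) : ℂ))

/-- The dyadic piece of φ_μ at frequency λ = 2^n (its Fourier projection to
{2^n ≤ |ξ| < 2^{n+1}}). -/
def phimuPiece (p μ : ℝ) (n : ℤ) : ℝ → ℂ := fun x =>
  if μ ^ 2 ≤ (2 : ℝ) ^ n ∧ (2 : ℝ) ^ n ≤ μ then
    ((|Real.log μ| ^ (-(1 / p)) : ℝ) : ℂ) * fl ((2 : ℝ) ^ n) x
  else 0

/-- φ_μ = |ln μ|^{-1/p} ∑_{λ ∈ 2^ℤ, μ² ≤ λ ≤ μ} f_λ. -/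
def phimu (p μ : ℝ) (x : ℝ) : ℂ := ∑' n : ℤ, phimuPiece p μ n x

lemma A_eq (l : ℝ) (hl : 0 < l) :
    {ξ : ℝ | l ≤ |ξ| ∧ |ξ| < 2 * l} = Set.Ico l (2 * l) ∪ Set.Ioc (-(2 * l)) (-l) := by
  ext x
  simp only [Set.mem_setOf_eq, Set.mem_union, Set.mem_Ico, Set.mem_Ioc]
  constructor
  · rintro ⟨h1, h2⟩
    rcases abs_cases x with ⟨h, _⟩ | ⟨h, _⟩
    · left; constructor <;> linarith
    · right; constructor <;> linarith
  · rintro (⟨h1, h2⟩ | ⟨h1, h2⟩)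
    · rw [abs_of_pos (by linarith)]; exact ⟨h1, h2⟩
    · rw [abs_of_neg (by linarith)]; constructor <;> linarith

lemma A_meas (l : ℝ) (hl : 0 < l) : MeasurableSet {ξ : ℝ | l ≤ |ξ| ∧ |ξ| < 2 * l} := by
  rw [A_eq l hl]; exact measurableSet_Ico.union measurableSet_Ioc

lemma A_disj (l : ℝ) (hl : 0 < l) :
    Disjoint (Set.Ico l (2 * l)) (Set.Ioc (-(2 * l)) (-l)) := by
  rw [Set.disjoint_left]
  intro x hx hy
  have := hx.1
  have := hy.2
  linarith

lemma A_vol (l : ℝ) (hl : 0 < l) :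
    volume {ξ : ℝ | l ≤ |ξ| ∧ |ξ| < 2 * l} = ENNReal.ofReal (2 * l) := by
  rw [A_eq l hl, measure_union (A_disj l hl) measurableSet_Ioc, Real.volume_Ico, Real.volume_Ioc,
    ← ENNReal.ofReal_add (by linarith) (by linarith)]
  congr 1; ring

lemma fl_eq (l : ℝ) (hl : 0 < l) (x : ℝ) :
    fl l x = ((l⁻¹ : ℝ) : ℂ) * ((∫ ξ in l..(2 * l), Complex.exp (Complex.I * ((x * ξ : ℝ) : ℂ)))
      + ∫ ξ in (-(2 * l))..(-l), Complex.exp (Complex.I * ((x * ξ : ℝ) : ℂ))) := by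
  have hc : Continuous (fun ξ : ℝ => Complex.exp (Complex.I * ((x * ξ : ℝ) : ℂ))) := by fun_prop
  unfold fl
  rw [integral_const_mul, A_eq l hl, setIntegral_union (A_disj l hl) measurableSet_Ioc,
    intervalIntegral.integral_of_le (by linarith), intervalIntegral.integral_of_le (by linarith),
    integral_Ico_eq_integral_Ioc]
  · exact (hc.integrableOn_Icc (a := l) (b := 2 * l)).mono_set Set.Ico_subset_Icc_self
  · exact (hc.integrableOn_Icc (a := -(2 * l)) (b := -l)).mono_set Set.Ioc_subset_Icc_self

lemma fl_scale (l : ℝ) (hl : 0 < l) (x : ℝ) : fl l x = fl 1 (l * x) := by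
  rw [fl_eq l hl, fl_eq 1 one_pos]
  have h : ∀ a b : ℝ, ∫ ξ in a..b, Complex.exp (Complex.I * ((l * x * ξ : ℝ) : ℂ))
      = ((l⁻¹ : ℝ) : ℂ) * ∫ ξ in (l * a)..(l * b), Complex.exp (Complex.I * ((x * ξ : ℝ) : ℂ)) := by
    intro a b
    have := intervalIntegral.integral_comp_mul_left (a := a) (b := b)
      (fun ξ : ℝ => Complex.exp (Complex.I * ((x * ξ : ℝ) : ℂ))) hl.ne'
    rw [Complex.real_smul] at this
    rw [← this]
    congr 1
    ext ξ
    congr 3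
    ring
  rw [h, h]
  have e1 : l * 1 = l := by ring
  have e2 : l * (2 * 1) = 2 * l := by ring
  have e3 : l * -(2 * 1) = -(2 * l) := by ring
  have e4 : l * -1 = -l := by ring
  rw [e1, e2, e3, e4]
  simp
  ring

lemma exp_norm (t : ℝ) : ‖Complex.exp (Complex.I * (t : ℂ))‖ = 1 := by
  rw [mul_comm]; exact Complex.norm_exp_ofReal_mul_I t

lemma fl_one_le (x : ℝ) : ‖fl 1 x‖ ≤ 2 := by
  have := norm_setIntegral_le_of_norm_le_const (μ := volume)
    (s := {ξ : ℝ | (1:ℝ) ≤ |ξ| ∧ |ξ| < 2 * 1}) (C := 1)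
    (f := fun ξ : ℝ => (((1:ℝ)⁻¹ : ℝ) : ℂ) * Complex.exp (Complex.I * ((x * ξ : ℝ) : ℂ)))
    (by rw [A_vol 1 one_pos]; exact ENNReal.ofReal_lt_top)
    (by intro ξ _; rw [norm_mul, exp_norm]; simp)
  unfold fl
  refine this.trans ?_
  rw [Measure.real, A_vol 1 one_pos, ENNReal.toReal_ofReal (by norm_num)]
  norm_num

lemma int_exp_le (x : ℝ) (hx : x ≠ 0) (a b : ℝ) :
    ‖∫ ξ in a..b, Complex.exp (Complex.I * ((x * ξ : ℝ) : ℂ))‖ ≤ 2 / |x| := by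
  have h : (fun ξ : ℝ => Complex.exp (Complex.I * ((x * ξ : ℝ) : ℂ)))
      = fun ξ : ℝ => Complex.exp ((Complex.I * (x : ℂ)) * (ξ : ℂ)) := by
    ext ξ; push_cast; congr 1; ring
  rw [h, integral_exp_mul_complex (by simp [hx])]
  rw [norm_div, norm_mul, Complex.norm_I, one_mul, Complex.norm_real, Real.norm_eq_abs]
  gcongr
  refine (norm_sub_le _ _).trans ?_
  have h2 : ∀ t : ℝ, ‖Complex.exp (Complex.I * (x : ℂ) * (t : ℂ))‖ = 1 := by
    intro t
    have := exp_norm (x * t)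
    rw [← this]; push_cast; congr 2; ring
  rw [h2, h2]; norm_num

lemma fl_one_decay (x : ℝ) (hx : x ≠ 0) : ‖fl 1 x‖ ≤ 4 / |x| := by
  rw [fl_eq 1 one_pos]
  have h1 := int_exp_le x hx 1 (2 * 1)
  have h2 := int_exp_le x hx (-(2 * 1)) (-1)
  have h3 : 4 / |x| = 2 / |x| + 2 / |x| := by ring
  simp only [inv_one, Complex.ofReal_one, one_mul]
  rw [h3]
  exact (norm_add_le _ _).trans (add_le_add (by simpa using h1) (by simpa using h2))

lemma fl_cont : Continuous (fl 1) := by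
  unfold fl
  refine continuous_of_dominated (bound := fun _ => 1) ?_ ?_ ?_ ?_
  · intro x
    exact Continuous.aestronglyMeasurable (by fun_prop)
  · intro x
    refine Filter.Eventually.of_forall fun ξ => ?_
    rw [norm_mul, exp_norm]; simp
  · have : volume {ξ : ℝ | (1:ℝ) ≤ |ξ| ∧ |ξ| < 2 * 1} ≠ ⊤ := by
      rw [A_vol 1 one_pos]; exact ENNReal.ofReal_ne_top
    exact integrableOn_const this
  · exact Filter.Eventually.of_forall fun ξ => by fun_prop

lemma fl_memLp : MemLp (fl 1) 2 volume := by
  rw [memLp_two_iff_integrable_sq_norm fl_cont.aestronglyMeasurable]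
  refine Integrable.mono' (integrable_inv_one_add_sq.const_mul 20)
    ((fl_cont.norm.pow 2).aestronglyMeasurable) (Filter.Eventually.of_forall fun x => ?_)
  rw [Real.norm_of_nonneg (by positivity), ← div_eq_mul_inv, le_div_iff₀ (by positivity)]
  have h1 := fl_one_le x
  have h0 := norm_nonneg (fl 1 x)
  have h2 : ‖fl 1 x‖ * |x| ≤ 4 := by
    rcases eq_or_ne x 0 with h | h
    · simp [h]
    · have := fl_one_decay x h
      rwa [le_div_iff₀ (abs_pos.mpr h)] at this
  have h3 : (‖fl 1 x‖ * |x|) ^ 2 ≤ 4 ^ 2 := by gcongr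
  have h4 : ‖fl 1 x‖ ^ 2 ≤ 2 ^ 2 := by gcongr
  rw [mul_pow, sq_abs] at h3
  nlinarith

lemma fl_zero : fl 1 0 = 2 := by
  rw [fl_eq 1 one_pos]; norm_num

lemma fl_ne : eLpNorm (fl 1) 2 volume ≠ 0 := by
  intro h
  rw [eLpNorm_eq_zero_iff fl_cont.aestronglyMeasurable (by norm_num)] at h
  have := Continuous.ae_eq_iff_eq volume fl_cont continuous_zero |>.mp h
  have h2 := congrFun this 0
  rw [fl_zero] at h2
  simp at h2

lemma fl_norm (l : ℝ) (hl : 0 < l) :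
    eLpNorm (fl l) 2 volume = ENNReal.ofReal (l⁻¹) ^ ((1:ℝ)/2) * eLpNorm (fl 1) 2 volume := by
  have h : fl l = fl 1 ∘ (fun x => l * x) := by ext x; exact fl_scale l hl x
  have hm := Real.map_volume_mul_left hl.ne'
  rw [h, ← eLpNorm_map_measure fl_cont.aestronglyMeasurable (by fun_prop), hm,
    eLpNorm_smul_measure_of_ne_top (by norm_num), abs_of_pos (by positivity)]
  simp

lemma term_eq (n : ℤ) : ((2 : ℝ≥0∞) ^ n) ^ ((1 : ℝ) / 2) * eLpNorm (fl ((2:ℝ) ^ n)) 2 volume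
    = eLpNorm (fl 1) 2 volume := by
  have hpos : (0:ℝ) < 2 ^ n := by positivity
  rw [fl_norm _ hpos, ← mul_assoc, ← ENNReal.mul_rpow_of_nonneg _ _ (by norm_num)]
  have : (2 : ℝ≥0∞) ^ n = ENNReal.ofReal ((2:ℝ) ^ n) := by
    rw [← Real.rpow_intCast, ← ENNReal.ofReal_rpow_of_pos (by norm_num), ENNReal.rpow_intCast]
    simp
  rw [this, ← ENNReal.ofReal_mul hpos.le, mul_inv_cancel₀ hpos.ne']
  simp

def cntSet (μ : ℝ) : Finset ℤ := Finset.Icc ⌈2 * Real.logb 2 μ⌉ ⌊Real.logb 2 μ⌋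

lemma mem_cnt (μ : ℝ) (hμ : 0 < μ) (n : ℤ) :
    n ∈ cntSet μ ↔ (μ ^ 2 ≤ (2 : ℝ) ^ n ∧ (2 : ℝ) ^ n ≤ μ) := by
  rw [cntSet, Finset.mem_Icc, Int.ceil_le, Int.le_floor, ← Real.rpow_intCast,
    Real.le_logb_iff_rpow_le (by norm_num) hμ, ← Real.logb_le_iff_le_rpow (by norm_num) (by positivity),
    Real.logb_pow]
  norm_num

lemma log_bd (μ : ℝ) (hμ : 0 < μ) (h : μ ≤ 1 / 4) :
    0 < |Real.log μ| ∧ |Real.log μ| / 2 ≤ ((cntSet μ).card : ℝ) ∧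
      ((cntSet μ).card : ℝ) ≤ 4 * |Real.log μ| := by
  set a := Real.logb 2 μ with ha
  have h2 : a ≤ -2 := by
    rw [ha, Real.logb_le_iff_le_rpow (by norm_num) hμ, Real.rpow_neg (by norm_num)]
    norm_num at h ⊢
    linarith
  have hlog2 := Real.log_two_gt_d9
  have hlog2' := Real.log_two_lt_d9
  have hl : |Real.log μ| = -a * Real.log 2 := by
    rw [ha, Real.logb, abs_of_neg (Real.log_neg hμ (by linarith))]
    field_simp
  have hcard : ((cntSet μ).card : ℝ) = (⌊a⌋ : ℝ) + 1 - ⌈2 * a⌉ := by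
    have f1 := Int.lt_floor_add_one a
    have f2 := Int.ceil_lt_add_one (2 * a)
    have : ⌈2 * a⌉ ≤ ⌊a⌋ + 1 := by
      have : (⌈2 * a⌉ : ℝ) ≤ ((⌊a⌋ + 1 : ℤ) : ℝ) := by push_cast; linarith
      exact_mod_cast this
    have := Int.card_Icc_of_le _ _ this
    have h3 : (((cntSet μ).card : ℤ) : ℝ) = ((⌊a⌋ + 1 - ⌈2 * a⌉ : ℤ) : ℝ) := by
      rw [← this]; rfl
    push_cast at h3
    exact h3
  rw [hl, hcard]
  have f1 := Int.lt_floor_add_one a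
  have f2 := Int.ceil_lt_add_one (2 * a)
  have f3 := Int.floor_le a
  have f4 := Int.le_ceil (2 * a)
  refine ⟨by nlinarith, by nlinarith, by nlinarith⟩

lemma pair_fl (ψ : SchwartzMap ℝ ℂ)
    (h1 : ∀ ξ ∈ Set.Icc (-1 : ℝ) 1, ft1 (fun x => ψ x) ξ = 1) (l : ℝ) (hl : 0 < l)
    (hl2 : 2 * l ≤ 1) : Integrable (fun x => ψ x * fl l x) ∧ ∫ x, ψ x * fl l x = 2 := by
  set A := {ξ : ℝ | l ≤ |ξ| ∧ |ξ| < 2 * l} with hA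
  have hfin : IsFiniteMeasure (volume.restrict A) :=
    ⟨by rw [Measure.restrict_apply_univ, A_vol l hl]; exact ENNReal.ofReal_lt_top⟩
  have hint : Integrable (fun z : ℝ × ℝ =>
      ψ z.1 * (((l⁻¹ : ℝ) : ℂ) * Complex.exp (Complex.I * ((z.1 * z.2 : ℝ) : ℂ))))
      (volume.prod (volume.restrict A)) := by
    have hb : Integrable (fun z : ℝ × ℝ => ψ z.1 * ((l⁻¹ : ℝ) : ℂ))
        (volume.prod (volume.restrict A)) :=
      Integrable.mul_prod ψ.integrable (integrable_const (μ := volume.restrict A) ((l⁻¹ : ℝ) : ℂ))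
    refine hb.mono ?_ ?_
    · have := ψ.continuous
      exact Continuous.aestronglyMeasurable (by fun_prop)
    · refine Filter.Eventually.of_forall fun z => ?_
      rw [norm_mul, norm_mul, exp_norm, norm_mul, mul_one]
  have e : ∀ x, ψ x * fl l x = ∫ ξ in A,
      ψ x * (((l⁻¹ : ℝ) : ℂ) * Complex.exp (Complex.I * ((x * ξ : ℝ) : ℂ))) := by
    intro x
    rw [integral_const_mul]; rfl
  constructor
  · simp_rw [e]
    exact hint.integral_prod_left
  · simp_rw [e]
    rw [integral_integral_swap hint]
    have : ∀ ξ ∈ A, (∫ x, ψ x * (((l⁻¹ : ℝ) : ℂ) * Complex.exp (Complex.I * ((x * ξ : ℝ) : ℂ))))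
        = ((l⁻¹ : ℝ) : ℂ) := by
      intro ξ hξ
      have hb := abs_lt.mp hξ.2
      have := h1 (-ξ) ⟨by linarith, by linarith⟩
      refine Eq.trans ?_ (mul_one ((l⁻¹ : ℝ) : ℂ))
      rw [← this, ft1, ← integral_const_mul]
      congr 1
      ext x
      have : (-Complex.I * ((x * -ξ : ℝ) : ℂ)) = Complex.I * ((x * ξ : ℝ) : ℂ) := by
        push_cast; ring
      rw [this]; ring
    rw [setIntegral_congr_fun (A_meas l hl) this, setIntegral_const, Measure.real, A_vol l hl,
      ENNReal.toReal_ofReal (by linarith), Complex.real_smul]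
    have : (l : ℂ) ≠ 0 := by exact_mod_cast hl.ne'
    push_cast
    field_simp

lemma phimu_eq (p μ : ℝ) (hμ : 0 < μ) (x : ℝ) : phimu p μ x =
    ∑ n ∈ cntSet μ, ((|Real.log μ| ^ (-(1 / p)) : ℝ) : ℂ) * fl ((2 : ℝ) ^ n) x := by
  unfold phimu
  rw [tsum_eq_sum (s := cntSet μ)]
  · refine Finset.sum_congr rfl fun n hn => ?_
    rw [mem_cnt μ hμ] at hn
    simp only [phimuPiece]
    rw [if_pos hn]
  · intro n hn
    rw [mem_cnt μ hμ] at hn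
    simp only [phimuPiece]
    rw [if_neg hn]

lemma sum_eq (p μ : ℝ) (hp : 1 < p) (hμ : 0 < μ) (h : μ ≤ 1 / 4) :
    (∑' n : ℤ, (((2 : ℝ≥0∞) ^ n) ^ ((1 : ℝ) / 2) *
            eLpNorm (phimuPiece p μ n) 2 volume) ^ p) ^ (1 / p) =
    ENNReal.ofReal ((((cntSet μ).card : ℝ) / |Real.log μ|) ^ (1 / p)
      * (eLpNorm (fl 1) 2 volume).toReal) := by
  obtain ⟨hL, -, -⟩ := log_bd μ hμ h
  set L := |Real.log μ|
  have hp0 : 0 < p := by linarith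
  have hK : eLpNorm (fl 1) 2 volume = ENNReal.ofReal (eLpNorm (fl 1) 2 volume).toReal :=
    (ENNReal.ofReal_toReal fl_memLp.2.ne).symm
  set K := (eLpNorm (fl 1) 2 volume).toReal with hKdef
  have hK0 : 0 ≤ K := ENNReal.toReal_nonneg
  have hterm : ∀ n ∈ cntSet μ, (((2 : ℝ≥0∞) ^ n) ^ ((1 : ℝ) / 2) *
            eLpNorm (phimuPiece p μ n) 2 volume) ^ p = ENNReal.ofReal (L⁻¹ * K ^ p) := by
    intro n hn
    rw [mem_cnt μ hμ] at hn
    have e : phimuPiece p μ n = ((L ^ (-(1 / p)) : ℝ) : ℂ) • fl ((2 : ℝ) ^ n) := by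
      ext x
      simp only [phimuPiece, Pi.smul_apply, smul_eq_mul]
      rw [if_pos hn]
    have e2 : ‖((L ^ (-(1 / p)) : ℝ) : ℂ)‖ₑ = ENNReal.ofReal (L ^ (-(1 / p))) := by
      rw [← ofReal_norm_eq_enorm, Complex.norm_real, Real.norm_of_nonneg (by positivity)]
    rw [e, eLpNorm_const_smul, mul_left_comm, term_eq, hK, e2,
      ← ENNReal.ofReal_mul (by positivity), ENNReal.ofReal_rpow_of_nonneg (by positivity) hp0.le,
      Real.mul_rpow (by positivity) hK0, ← Real.rpow_mul hL.le]
    have : -(1 / p) * p = -1 := by field_simp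
    rw [this, Real.rpow_neg_one]
  rw [tsum_eq_sum (s := cntSet μ)]
  · rw [Finset.sum_congr rfl hterm, Finset.sum_const, nsmul_eq_mul, ← ENNReal.ofReal_natCast]
    have hN : (0 : ℝ) ≤ ((cntSet μ).card : ℝ) := Nat.cast_nonneg _
    generalize ((cntSet μ).card : ℝ) = N at hN ⊢
    rw [← ENNReal.ofReal_mul (by positivity),
      ENNReal.ofReal_rpow_of_nonneg (by positivity) (by positivity)]
    congr 1
    rw [← mul_assoc, Real.mul_rpow (by positivity) (by positivity), ← Real.rpow_mul hK0,
      mul_one_div_cancel hp0.ne', Real.rpow_one, ← div_eq_mul_inv N L]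
  · intro n hn
    rw [mem_cnt μ hμ] at hn
    have e : phimuPiece p μ n = 0 := by
      ext x
      simp only [phimuPiece]
      rw [if_neg hn]; rfl
    rw [e, eLpNorm_zero, mul_zero, ENNReal.zero_rpow_of_pos hp0]

theorem besov_example (p : ℝ) (hp : 1 < p) :
    -- (a) uniform two-sided bound for the Ḃ^{1/2}_{2,p} norm of φ_μ
    (∃ c C : ℝ, 0 < c ∧ 0 < C ∧ ∀ μ : ℝ, 0 < μ → μ ≤ 1 / 4 →
      ENNReal.ofReal c ≤
          (∑' n : ℤ, (((2 : ℝ≥0∞) ^ n) ^ ((1 : ℝ) / 2) *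
            eLpNorm (phimuPiece p μ n) 2 volume) ^ p) ^ (1 / p) ∧
        (∑' n : ℤ, (((2 : ℝ≥0∞) ^ n) ^ ((1 : ℝ) / 2) *
            eLpNorm (phimuPiece p μ n) 2 volume) ^ p) ^ (1 / p) ≤ ENNReal.ofReal C) ∧
    -- (b) divergence of the pairing with suitable Schwartz functions
    (∀ ψ : SchwartzMap ℝ ℂ,
      (∀ ξ : ℝ, ft1 (fun x => ψ x) ξ ≠ 0 → ξ ∈ Set.Icc (-2 : ℝ) 2) →
      (∀ ξ ∈ Set.Icc (-1 : ℝ) 1, ft1 (fun x => ψ x) ξ = 1) →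
      ∃ cψ : ℝ, 0 < cψ ∧ ∃ μ₀ : ℝ, 0 < μ₀ ∧ ∀ μ : ℝ, 0 < μ → μ ≤ μ₀ →
        cψ * |Real.log μ| ^ (1 - 1 / p) ≤ (∫ x : ℝ, ψ x * phimu p μ x).re) := by
  have hp0 : 0 < p := by linarith
  constructor
  · have hK : 0 < (eLpNorm (fl 1) 2 volume).toReal := ENNReal.toReal_pos fl_ne fl_memLp.2.ne
    refine ⟨(1 / 2 : ℝ) ^ (1 / p) * (eLpNorm (fl 1) 2 volume).toReal,
      (4 : ℝ) ^ (1 / p) * (eLpNorm (fl 1) 2 volume).toReal, by positivity, by positivity, ?_⟩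
    intro μ hμ h
    obtain ⟨hL, hlo, hhi⟩ := log_bd μ hμ h
    rw [sum_eq p μ hp hμ h]
    constructor
    · refine ENNReal.ofReal_le_ofReal ?_
      have h3 : (1 / 2 : ℝ) ≤ ((cntSet μ).card : ℝ) / |Real.log μ| := by
        rw [le_div_iff₀ hL]; linarith
      exact mul_le_mul_of_nonneg_right
        (Real.rpow_le_rpow (by norm_num) h3 (by positivity)) hK.le
    · refine ENNReal.ofReal_le_ofReal ?_
      gcongr
      rw [div_le_iff₀ hL]; linarith
  · intro ψ _ h1
    refine ⟨1, one_pos, 1 / 4, by norm_num, ?_⟩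
    intro μ hμ h
    obtain ⟨hL, hlo, hhi⟩ := log_bd μ hμ h
    have hsmall : ∀ n ∈ cntSet μ, 2 * (2 : ℝ) ^ n ≤ 1 := by
      intro n hn
      rw [mem_cnt μ hμ] at hn
      linarith [hn.2]
    have e : (fun x => ψ x * phimu p μ x) = fun x => ∑ n ∈ cntSet μ,
        ((|Real.log μ| ^ (-(1 / p)) : ℝ) : ℂ) * (ψ x * fl ((2 : ℝ) ^ n) x) := by
      ext x
      rw [phimu_eq p μ hμ, Finset.mul_sum]
      exact Finset.sum_congr rfl fun n _ => by ring
    rw [e, integral_finset_sum _ fun n hn =>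
      (pair_fl ψ h1 _ (by positivity) (hsmall n hn)).1.const_mul _]
    have e2 : ∀ n ∈ cntSet μ, ∫ x, ((|Real.log μ| ^ (-(1 / p)) : ℝ) : ℂ) *
        (ψ x * fl ((2 : ℝ) ^ n) x) = ((|Real.log μ| ^ (-(1 / p)) * 2 : ℝ) : ℂ) := by
      intro n hn
      rw [integral_const_mul, (pair_fl ψ h1 _ (by positivity) (hsmall n hn)).2]
      push_cast; rfl
    rw [Finset.sum_congr rfl e2, Finset.sum_const, nsmul_eq_mul, ← Complex.ofReal_natCast,
      ← Complex.ofReal_mul, Complex.ofReal_re, sub_eq_add_neg, Real.rpow_add hL, Real.rpow_one,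
      one_mul]
    have : 0 < |Real.log μ| ^ (-(1 / p)) := by positivity
    nlinarith
end
end

section
/- Define the KP-II resonance function R(ξ,ξ₁,η,η₁) = −3 ξ ξ₁ (ξ−ξ₁) − ( ξ ξ₁/(ξ−ξ₁) ) · | η/ξ − η₁/ξ₁ |² for ξ, ξ₁, ξ−ξ₁ ≠ 0, η, η₁ ∈ ℝ². There exist constants c, C > 0 such that for all real λ ≥ 16 and 0 < μ ≤ 1 the following holds: whenever ξ₁ ∈ [μ/2, μ], ξ − ξ₁ ∈ [λ + μ/2, λ + μ], η₁ ∈ [λμ/2, 2λμ]² and η − η₁ ∈ [λμ/2, 2λμ]², one has c λ² μ ≤ |R(ξ,ξ₁,η,η₁)| ≤ C λ² μ. -/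
/-!
STATEMENT 17: two-sided bound for the KP-II resonance function
R(ξ,ξ₁,η,η₁) = −3ξξ₁(ξ−ξ₁) − (ξξ₁/(ξ−ξ₁))|η/ξ − η₁/ξ₁|²
on the interaction region: there are universal constants c, C > 0 such that
for λ ≥ 16, 0 < μ ≤ 1, ξ₁ ∈ [μ/2,μ], ξ−ξ₁ ∈ [λ+μ/2,λ+μ],
η₁ ∈ [λμ/2,2λμ]², η−η₁ ∈ [λμ/2,2λμ]², one has cλ²μ ≤ |R| ≤ Cλ²μ.
-/

noncomputable section

abbrev E2 := EuclideanSpace ℝ (Fin 2)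

/-- The KP-II resonance function. -/
def Rres (ξ ξ₁ : ℝ) (η η₁ : E2) : ℝ :=
  -3 * ξ * ξ₁ * (ξ - ξ₁) - ξ * ξ₁ / (ξ - ξ₁) * ‖ξ⁻¹ • η - ξ₁⁻¹ • η₁‖ ^ 2

theorem resonance_two_sided_bound :
    ∃ c C : ℝ, 0 < c ∧ 0 < C ∧
      ∀ lam μ : ℝ, 16 ≤ lam → 0 < μ → μ ≤ 1 →
      ∀ ξ ξ₁ : ℝ, ∀ η η₁ : E2,
        ξ₁ ∈ Set.Icc (μ / 2) μ →
        ξ - ξ₁ ∈ Set.Icc (lam + μ / 2) (lam + μ) →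
        (∀ i : Fin 2, η₁ i ∈ Set.Icc (lam * μ / 2) (2 * lam * μ)) →
        (∀ i : Fin 2, (η - η₁) i ∈ Set.Icc (lam * μ / 2) (2 * lam * μ)) →
        c * lam ^ 2 * μ ≤ |Rres ξ ξ₁ η η₁| ∧ |Rres ξ ξ₁ η η₁| ≤ C * lam ^ 2 * μ := by
  refine ⟨1, 100, one_pos, by norm_num, ?_⟩
  intro lam μ hl hμ hμ1 ξ ξ₁ η η₁ h1 h2 h3 h4
  obtain ⟨h1a, h1b⟩ := h1
  obtain ⟨h2a, h2b⟩ := h2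
  have hx1 : 0 < ξ₁ := by linarith
  have hd : lam ≤ ξ - ξ₁ := by linarith
  have hd0 : 0 < ξ - ξ₁ := by linarith
  have hd2 : ξ - ξ₁ ≤ 2 * lam := by linarith
  have hx : lam ≤ ξ := by linarith
  have hx0 : 0 < ξ := by linarith
  have hx2 : ξ ≤ 2 * lam := by linarith
  have hxd : ξ / (ξ - ξ₁) ≤ 2 := by
    rw [div_le_iff₀ hd0]; linarith
  have hxd0 : 0 ≤ ξ / (ξ - ξ₁) := by positivity
  have hlm : 0 < lam * μ := by nlinarith
  have key : ∀ i : Fin 2, ((ξ⁻¹ • η - ξ₁⁻¹ • η₁) i) ^ 2 ≤ (4 * lam) ^ 2 := by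
    intro i
    obtain ⟨a1, a2⟩ := h3 i
    have h4i := h4 i
    rw [PiLp.sub_apply] at h4i
    obtain ⟨b1, b2⟩ := h4i
    rw [PiLp.sub_apply, PiLp.smul_apply, PiLp.smul_apply, smul_eq_mul, smul_eq_mul]
    have e1 : ξ⁻¹ * η i ≤ 4 * lam := by
      rw [inv_mul_le_iff₀ hx0]; nlinarith
    have e2 : ξ₁⁻¹ * η₁ i ≤ 4 * lam := by
      rw [inv_mul_le_iff₀ hx1]; nlinarith
    have e3 : 0 ≤ ξ⁻¹ * η i := mul_nonneg (by positivity) (by linarith)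
    have e4 : 0 ≤ ξ₁⁻¹ * η₁ i := mul_nonneg (by positivity) (by linarith)
    apply sq_le_sq'  <;> linarith
  have hN : ‖ξ⁻¹ • η - ξ₁⁻¹ • η₁‖ ^ 2 ≤ 32 * lam ^ 2 := by
    rw [EuclideanSpace.real_norm_sq_eq, Fin.sum_univ_two]
    linarith [key 0, key 1]
  have hN0 : 0 ≤ ‖ξ⁻¹ • η - ξ₁⁻¹ • η₁‖ ^ 2 := by positivity
  unfold Rres
  generalize ‖ξ⁻¹ • η - ξ₁⁻¹ • η₁‖ ^ 2 = N at hN hN0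
  have hT0 : 0 ≤ ξ * ξ₁ / (ξ - ξ₁) * N := by positivity
  have hT : ξ * ξ₁ / (ξ - ξ₁) * N ≤ 64 * (lam ^ 2 * μ) := by
    calc ξ * ξ₁ / (ξ - ξ₁) * N = ξ / (ξ - ξ₁) * ξ₁ * N := by ring
      _ ≤ 2 * μ * (32 * lam ^ 2) := by gcongr
      _ = _ := by ring
  have hS1 : lam * (μ / 2) * lam ≤ ξ * ξ₁ * (ξ - ξ₁) := by gcongr
  have hS2 : ξ * ξ₁ * (ξ - ξ₁) ≤ 2 * lam * μ * (2 * lam) := by gcongr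
  have hp : 0 < lam ^ 2 * μ := by positivity
  rw [abs_of_nonpos (by nlinarith)]
  constructor <;> nlinarith
end
end
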